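/- Let L ≥ 3 and let P be the projection onto the hole-free subspace. For every bulk bond 1 ≤ j ≤ L−2 one has P U_KT σʸ_j σʸ_{j+1} U_KT P = −P σˣ_j σˣ_{j+1} P, while for the wrap-around pair one has P U_KT σʸ_L σʸ_1 U_KT P = (−1)^{L−1} P σˣ_L σˣ_1 P. -/

import Mathlib

noncomputable section
open Complex Matrix

/-- The Hilbert space operators of the `L`-site spin-1 chain: matrices on `(ℂ³)^{⊗L}`,
with the tensor factors indexed by sites and the single-site ordered basis `(|+⟩,|0⟩,|−⟩)`. -/
abbrev Op (L : ℕ) : Type := Matrix (Fin L → Fin 3) (Fin L → Fin 3) ℂ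

/-- The spin-1 matrix `Sˣ`. -/
def Sx : Matrix (Fin 3) (Fin 3) ℂ :=
  ((Real.sqrt 2 : ℝ) : ℂ)⁻¹ • !![0, 1, 0; 1, 0, 1; 0, 1, 0]

/-- The spin-1 matrix `Sʸ`. -/
def Sy : Matrix (Fin 3) (Fin 3) ℂ :=
  ((Real.sqrt 2 : ℝ) : ℂ)⁻¹ • !![0, -I, 0; I, 0, -I; 0, I, 0]

/-- The spin-1 matrix `Sᶻ = diag(1,0,−1)`. -/
def Sz : Matrix (Fin 3) (Fin 3) ℂ := !![1, 0, 0; 0, 0, 0; 0, 0, -1]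

/-- `site A j` is the one-site operator `A` acting on site `j` and identity elsewhere. -/
def site {L : ℕ} (A : Matrix (Fin 3) (Fin 3) ℂ) (j : Fin L) : Op L :=
  Matrix.of fun f g => ∏ k : Fin L, if k = j then A (f k) (g k) else (if f k = g k then 1 else 0)

/-- One factor `exp(iπ Sᶻ_u Sˣ_v)` of the Kennedy–Tasaki transformation. -/
def ktFactor {L : ℕ} (u v : Fin L) : Op L :=
  NormedSpace.exp (((Real.pi : ℂ) * I) • (site Sz u * site Sx v))

/-- The Kennedy–Tasaki transformation `U_KT = ∏_{1 ≤ u < v ≤ L} exp(iπ Sᶻ_u Sˣ_v)`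
(the factors pairwise commute, so the ordering is immaterial). -/
def UKT (L : ℕ) : Op L :=
  ((List.finRange L).map fun u =>
    ((List.finRange L).map fun v => if u < v then ktFactor u v else 1).prod).prod

/-- The p-wave basis vector `|↑⟩ = (|+⟩ − |−⟩)/√2`. -/
def up : Fin 3 → ℂ := ![((Real.sqrt 2 : ℝ) : ℂ)⁻¹, 0, -((Real.sqrt 2 : ℝ) : ℂ)⁻¹]

/-- The p-wave basis vector `|↓⟩ = |0⟩`. -/
def down : Fin 3 → ℂ := ![0, 1, 0]

/-- The p-wave basis vector `|h⟩ = (|+⟩ + |−⟩)/√2`. -/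
def hole : Fin 3 → ℂ := ![((Real.sqrt 2 : ℝ) : ℂ)⁻¹, 0, ((Real.sqrt 2 : ℝ) : ℂ)⁻¹]

/-- The rank-one operator `|a⟩⟨b|`. -/
def ketbra (a b : Fin 3 → ℂ) : Matrix (Fin 3) (Fin 3) ℂ := Matrix.vecMulVec a (star b)

/-- `σˣ = |↑⟩⟨↓| + |↓⟩⟨↑|` (annihilating `|h⟩`). -/
def sigx : Matrix (Fin 3) (Fin 3) ℂ := ketbra up down + ketbra down up

/-- `σʸ = −i|↑⟩⟨↓| + i|↓⟩⟨↑|` (annihilating `|h⟩`). -/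
def sigy : Matrix (Fin 3) (Fin 3) ℂ := (-I) • ketbra up down + I • ketbra down up

/-- `σᶻ = |↑⟩⟨↑| − |↓⟩⟨↓|` (annihilating `|h⟩`). -/
def sigz : Matrix (Fin 3) (Fin 3) ℂ := ketbra up up - ketbra down down

/-- `n = |↑⟩⟨↑| + |↓⟩⟨↓|` (annihilating `|h⟩`). -/
def nMat : Matrix (Fin 3) (Fin 3) ℂ := ketbra up up + ketbra down down

/-- `h = |h⟩⟨h|`. -/
def hMat : Matrix (Fin 3) (Fin 3) ℂ := ketbra hole hole

/-- `P = ⊗_{j=1}^L n_j`, the orthogonal projection onto the hole-free subspace. -/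
def Pproj (L : ℕ) : Op L := Matrix.of fun f g => ∏ k : Fin L, nMat (f k) (g k)

/-- The Heisenberg coupling `S_j · S_k`. -/
def heis {L : ℕ} (j k : Fin L) : Op L :=
  site Sx j * site Sx k + site Sy j * site Sy k + site Sz j * site Sz k

/-- The bilinear-biquadratic Hamiltonian
`H_BLBQ(θ) = Σ_{j=1}^{L−1} [cosθ (S_j·S_{j+1}) + sinθ (S_j·S_{j+1})²]`. -/
def HBLBQ (L : ℕ) (θ : ℝ) : Op L :=
  ∑ j : Fin L, if h : (j : ℕ) + 1 < L then
    ((Real.cos θ : ℝ) : ℂ) • heis j ⟨(j : ℕ) + 1, h⟩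
      + ((Real.sin θ : ℝ) : ℂ) • (heis j ⟨(j : ℕ) + 1, h⟩) ^ 2
  else 0

/-- The self-dual Hamiltonian `H_SD(θ) = H_BLBQ(θ) + U_KT H_BLBQ(θ) U_KT`. -/
def HSD (L : ℕ) (θ : ℝ) : Op L := HBLBQ L θ + UKT L * HBLBQ L θ * UKT L

/-- The spin-1/2 XXZ Hamiltonian written in the p-wave basis:
`H_XXZ(θ) = (cosθ−sinθ) Σ_j (−σˣ_jσˣ_{j+1} + σʸ_jσʸ_{j+1}) + sinθ Σ_j σᶻ_jσᶻ_{j+1}`. -/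
def HXXZ (L : ℕ) (θ : ℝ) : Op L :=
  ((Real.cos θ - Real.sin θ : ℝ) : ℂ) •
    (∑ j : Fin L, if h : (j : ℕ) + 1 < L then
      -(site sigx j * site sigx ⟨(j : ℕ) + 1, h⟩) + site sigy j * site sigy ⟨(j : ℕ) + 1, h⟩
    else 0)
  + ((Real.sin θ : ℝ) : ℂ) •
    (∑ j : Fin L, if h : (j : ℕ) + 1 < L then
      site sigz j * site sigz ⟨(j : ℕ) + 1, h⟩
    else 0)

/-- The global product `∏_{j=1}^L exp(c • A_j)` of commuting single-site exponentials. -/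
def globalProd (L : ℕ) (A : Matrix (Fin 3) (Fin 3) ℂ) (c : ℂ) : Op L :=
  ((List.finRange L).map fun j => NormedSpace.exp (c • site A j)).prod

/-- The symmetry flux `F^y_j = exp(−iπ Σ_{k<j} Sʸ_k) · Sʸ_j`. -/
def fluxY (L : ℕ) (j : Fin L) : Op L :=
  NormedSpace.exp ((-((Real.pi : ℂ) * I)) •
    ∑ k : Fin L, if (k : ℕ) < (j : ℕ) then site Sy k else 0) * site Sy j

/-!
In the p-wave basis each factor `exp(iπ Sᶻ_u Sˣ_v) = 1 - 2 (Sᶻ_u)² (Sˣ_v)²` of `U_KT` is diagonal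
with entries `±1`, so `U_KT` is an involution, and flipping `|↑⟩ ↔ |↓⟩` at site `j` changes its
eigenvalue by `exp(iπSᶻ)` on every site left of `j` and by `exp(iπSˣ)` on every site right of `j`.
Hence `U_KT` conjugates `σʸ_j` to `σʸ_j` times this string of half-turns. For a pair `j < k` the two
strings cancel outside `[j, k]`; at each site strictly between, `exp(iπSˣ) exp(iπSᶻ)` is `-1` on
hole-free states; and at the ends `σʸ exp(iπSᶻ) = exp(iπSˣ) σʸ = -i σˣ`. The total sign is
`(-i)² (-1)^(k - j - 1) = (-1)^(j + k)`.
-/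

section PiKronecker

variable {ι n R : Type*} [Fintype ι] [DecidableEq ι] [Fintype n] [DecidableEq n] [CommSemiring R]

/-- The Kronecker product `⨂ k, A k` of a finite family of square matrices, acting on the
configurations `ι → n`, as a monoid homomorphism in the family `A`. -/
def piKronecker : (ι → Matrix n n R) →* Matrix (ι → n) (ι → n) R where
  toFun A := Matrix.of fun f g => ∏ k, A k (f k) (g k)
  map_one' := by
    ext f g
    simp [Matrix.one_apply, Finset.prod_ite_zero, funext_iff]
  map_mul' A B := by
    ext f g
    simp only [Matrix.mul_apply, Matrix.of_apply, Pi.mul_apply, ← Finset.prod_mul_distrib,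
      Finset.prod_univ_sum, Fintype.piFinset_univ]

theorem piKronecker_apply (A : ι → Matrix n n R) (f g : ι → n) :
    piKronecker A f g = ∏ k, A k (f k) (g k) := rfl

theorem piKronecker_smul (c : ι → R) (A : ι → Matrix n n R) :
    piKronecker (fun k => c k • A k) = (∏ k, c k) • piKronecker A := by
  ext f g
  simp [piKronecker_apply, Finset.prod_mul_distrib]

theorem piKronecker_diagonal (d : ι → n → R) :
    piKronecker (fun k => Matrix.diagonal (d k)) = Matrix.diagonal fun f => ∏ k, d k (f k) := by
  ext f g
  simp [piKronecker_apply, Matrix.diagonal_apply, Finset.prod_ite_zero, funext_iff]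

theorem star_piKronecker [StarRing R] (A : ι → Matrix n n R) :
    star (piKronecker A) = piKronecker (star A) := by
  ext f g
  simp [piKronecker_apply, Matrix.star_apply]

theorem piKronecker_mem_unitaryGroup {R : Type*} [CommRing R] [StarRing R] {A : ι → Matrix n n R}
    (hA : ∀ k, A k ∈ Matrix.unitaryGroup n R) :
    piKronecker A ∈ Matrix.unitaryGroup (ι → n) R := by
  have hA' : star A * A = 1 := funext fun k => Matrix.mem_unitaryGroup_iff'.mp (hA k)
  rw [Matrix.mem_unitaryGroup_iff', star_piKronecker, ← map_mul, hA', map_one]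

end PiKronecker

section HalfTurn

theorem exp_smul_of_isIdempotentElem {𝕂 𝔸 : Type*} [RCLike 𝕂] [NormedRing 𝔸] [NormedAlgebra 𝕂 𝔸]
    [CompleteSpace 𝔸] {p : 𝔸} (hp : IsIdempotentElem p) (z : 𝕂) :
    NormedSpace.exp (z • p) = 1 + (NormedSpace.exp z - 1) • p := by
  have hz : HasSum (fun n : ℕ => (n.factorial : 𝕂)⁻¹ * z ^ n) (NormedSpace.exp z) := by
    simpa using NormedSpace.exp_series_hasSum_exp' (𝕂 := 𝕂) z
  have hone : HasSum (fun n : ℕ => if n = 0 then 1 - p else 0) (1 - p) := hasSum_ite_eq 0 _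
  have hseries : ∀ n : ℕ, (n.factorial : 𝕂)⁻¹ • (z • p) ^ n =
      ((n.factorial : 𝕂)⁻¹ * z ^ n) • p + if n = 0 then 1 - p else 0
    | 0 => by simp
    | n + 1 => by simp [smul_pow, hp.pow_succ_eq, smul_smul]
  have hsum := (hz.smul_const p).add hone
  simp only [← hseries] at hsum
  rw [(NormedSpace.exp_series_hasSum_exp' (𝕂 := 𝕂) (z • p)).unique hsum]
  module

theorem isIdempotentElem_sq_of_pow_three_eq_self {M : Type*} [Monoid M] {S : M} (hS : S ^ 3 = S) :
    IsIdempotentElem (S ^ 2) := by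
  rw [IsIdempotentElem, ← pow_add, pow_succ, hS, sq]

variable {A : Type*} [Ring A] [Algebra ℂ A] {S : A}

/-- The rotation by `π` generated by a spin-1 component `S`: it is `exp(iπS)` when `S ^ 3 = S`. -/
def halfTurn (S : A) : A := 1 - (2 : ℂ) • S ^ 2

theorem halfTurn_mul_self (hS : S ^ 3 = S) : halfTurn S * halfTurn S = 1 := by
  simp only [halfTurn, sub_mul, mul_sub, smul_mul_smul_comm, one_mul, mul_one,
    (isIdempotentElem_sq_of_pow_three_eq_self hS).eq]
  module

theorem isIdempotentElem_half_smul_add_sq (hS : S ^ 3 = S) :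
    IsIdempotentElem ((1 / 2 : ℂ) • (S + S ^ 2)) := by
  have hleft : S * S ^ 2 = S := by rw [← pow_succ', hS]
  have hright : S ^ 2 * S = S := by rw [← pow_succ, hS]
  rw [IsIdempotentElem, smul_mul_smul_comm, add_mul, mul_add, mul_add, hleft, hright, ← sq S,
    (isIdempotentElem_sq_of_pow_three_eq_self hS).eq]
  module

-- With the projection `p = (S + S²) / 2`, `iπS = 2πi p - iπS²`, and `exp(2πi p) = 1`.
theorem exp_pi_mul_I_smul_eq_halfTurn {𝔸 : Type*} [NormedRing 𝔸] [NormedAlgebra ℂ 𝔸]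
    [CompleteSpace 𝔸] {S : 𝔸} (hS : S ^ 3 = S) :
    NormedSpace.exp (((Real.pi : ℂ) * I) • S) = halfTurn S := by
  have hsplit : ((Real.pi : ℂ) * I) • S =
      (2 * Real.pi * I : ℂ) • ((1 / 2 : ℂ) • (S + S ^ 2)) + (-(Real.pi * I) : ℂ) • S ^ 2 := by
    module
  have hcomm : Commute ((2 * Real.pi * I : ℂ) • ((1 / 2 : ℂ) • (S + S ^ 2)))
      ((-(Real.pi * I) : ℂ) • S ^ 2) :=
    .smul_right (.smul_left (.smul_left (.add_left (.self_pow S 2) (.refl _)) _) _) _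
  let _ := NormedAlgebra.restrictScalars ℚ ℂ 𝔸
  rw [hsplit, NormedSpace.exp_add_of_commute hcomm,
    exp_smul_of_isIdempotentElem (isIdempotentElem_half_smul_add_sq hS),
    exp_smul_of_isIdempotentElem (isIdempotentElem_sq_of_pow_three_eq_self hS),
    ← Complex.exp_eq_exp_ℂ, Complex.exp_two_pi_mul_I, Complex.exp_neg, Complex.exp_pi_mul_I,
    inv_neg_one, sub_self, zero_smul, add_zero, one_mul, halfTurn]
  module

end HalfTurn

section Site

variable {L : ℕ}

theorem site_eq_piKronecker (A : Matrix (Fin 3) (Fin 3) ℂ) (j : Fin L) :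
    site A j = piKronecker (Pi.mulSingle j A) := by
  ext f g
  rw [site, Matrix.of_apply, piKronecker_apply]
  refine Finset.prod_congr rfl fun k _ => ?_
  by_cases hk : k = j
  · subst hk; simp
  · simp [hk, Matrix.one_apply]

theorem Pproj_eq_piKronecker : Pproj L = piKronecker fun _ => nMat := rfl

theorem commute_site (A B : Matrix (Fin 3) (Fin 3) ℂ) {j k : Fin L} (hjk : j ≠ k) :
    Commute (site A j) (site B k) := by
  simp only [site_eq_piKronecker]
  exact (Pi.mulSingle_commute hjk A B).map piKronecker

theorem site_pow (A : Matrix (Fin 3) (Fin 3) ℂ) (j : Fin L) (m : ℕ) :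
    site A j ^ m = site (A ^ m) j := by
  rw [site_eq_piKronecker, ← map_pow, ← Pi.mulSingle_pow, site_eq_piKronecker]

theorem site_diagonal (d : Fin 3 → ℂ) (j : Fin L) :
    site (Matrix.diagonal d) j = Matrix.diagonal fun f : Fin L → Fin 3 => d (f j) := by
  ext f g
  by_cases h : f = g
  · simp [site, h]
  · obtain ⟨k, hk⟩ := Function.ne_iff.mp h
    rw [Matrix.diagonal_apply_ne _ h, site, Matrix.of_apply]
    exact Finset.prod_eq_zero (Finset.mem_univ k) (by simp [hk])

theorem site_apply_ne_zero {A : Matrix (Fin 3) (Fin 3) ℂ} {j : Fin L} {f g : Fin L → Fin 3}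
    (h : site A j f g ≠ 0) : A (f j) (g j) ≠ 0 ∧ ∀ k ≠ j, f k = g k := by
  rw [site, Matrix.of_apply, Finset.prod_ne_zero_iff] at h
  refine ⟨by simpa using h j (Finset.mem_univ j), fun k hk => ?_⟩
  simpa [hk] using h k (Finset.mem_univ k)

end Site

section Frame

theorem inv_sqrt_two_mul_self : ((√2 : ℝ) : ℂ)⁻¹ * ((√2 : ℝ) : ℂ)⁻¹ = 1 / 2 := by
  rw [← mul_inv, ← Complex.ofReal_mul, Real.mul_self_sqrt zero_le_two]
  norm_num

theorem Sz_pow_three : Sz ^ 3 = Sz := by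
  ext i j
  fin_cases i <;> fin_cases j <;> simp [Sz, pow_succ]

theorem Sx_pow_three : Sx ^ 3 = Sx := by
  rw [Sx, smul_pow, pow_succ, sq, inv_sqrt_two_mul_self]
  ext i j
  fin_cases i <;> fin_cases j <;> simp [pow_succ] <;> ring

theorem ketbra_apply (a b : Fin 3 → ℂ) (i j : Fin 3) : ketbra a b i j = a i * star (b j) := rfl

/-- The unitary matrix whose columns are the p-wave basis vectors `|↑⟩, |↓⟩, |h⟩`. -/
def pwaveMatrix : Matrix.unitaryGroup (Fin 3) ℂ where
  val := (Matrix.of ![up, down, hole])ᵀ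
  property := by
    rw [Matrix.mem_unitaryGroup_iff']
    ext i j
    fin_cases i <;> fin_cases j <;>
      norm_num [up, down, hole, Matrix.mul_apply, Fin.sum_univ_succ, inv_sqrt_two_mul_self]

theorem Sz_sq : Sz ^ 2 = ketbra up up + ketbra hole hole := by
  ext i j
  fin_cases i <;> fin_cases j <;>
    norm_num [sq, Sz, ketbra_apply, up, hole, inv_sqrt_two_mul_self]

theorem Sx_sq : Sx ^ 2 = ketbra down down + ketbra hole hole := by
  ext i j
  fin_cases i <;> fin_cases j <;>
    norm_num [sq, Sx, ketbra_apply, down, hole, inv_sqrt_two_mul_self]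

/-- The matrix of a one-site operator in the p-wave basis, with `|↑⟩, |↓⟩, |h⟩` indexed by
`0, 1, 2`. -/
def toPwave : Matrix (Fin 3) (Fin 3) ℂ ≃⋆ₐ[ℂ] Matrix (Fin 3) (Fin 3) ℂ :=
  Unitary.conjStarAlgAut ℂ _ (star pwaveMatrix)

theorem toPwave_ketbra (i j : Fin 3) :
    toPwave (ketbra (![up, down, hole] i) (![up, down, hole] j)) = Matrix.single i j 1 := by
  have h : ketbra (![up, down, hole] i) (![up, down, hole] j) =
      Unitary.conjStarAlgAut ℂ _ pwaveMatrix (Matrix.single i j 1) := by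
    rw [Unitary.conjStarAlgAut_apply]
    ext k l
    simp [ketbra_apply, pwaveMatrix, Matrix.single_eq_single_vecMulVec_single,
      Matrix.mul_vecMulVec, Matrix.vecMulVec_mul, Matrix.vecMulVec_apply]
  rw [h, toPwave, ← Unitary.conjStarAlgAut_mul_apply]
  simp

theorem toPwave_sigx : toPwave sigx = !![0, 1, 0; 1, 0, 0; 0, 0, 0] := by
  have hup_down : toPwave (ketbra up down) = single 0 1 1 := toPwave_ketbra 0 1
  have hdown_up : toPwave (ketbra down up) = single 1 0 1 := toPwave_ketbra 1 0
  rw [sigx, map_add, hup_down, hdown_up]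
  ext i j
  fin_cases i <;> fin_cases j <;> simp

theorem toPwave_sigy : toPwave sigy = !![0, -I, 0; I, 0, 0; 0, 0, 0] := by
  have hup_down : toPwave (ketbra up down) = single 0 1 1 := toPwave_ketbra 0 1
  have hdown_up : toPwave (ketbra down up) = single 1 0 1 := toPwave_ketbra 1 0
  rw [sigy, map_add, map_smul, map_smul, hup_down, hdown_up]
  ext i j
  fin_cases i <;> fin_cases j <;> simp

theorem toPwave_nMat : toPwave nMat = diagonal ![1, 1, 0] := by
  have hup_up : toPwave (ketbra up up) = single 0 0 1 := toPwave_ketbra 0 0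
  have hdown_down : toPwave (ketbra down down) = single 1 1 1 := toPwave_ketbra 1 1
  rw [nMat, map_add, hup_up, hdown_down]
  ext i j
  fin_cases i <;> fin_cases j <;> simp

theorem toPwave_Sz_sq : toPwave (Sz ^ 2) = diagonal ![1, 0, 1] := by
  have hup_up : toPwave (ketbra up up) = single 0 0 1 := toPwave_ketbra 0 0
  have h_hole_hole : toPwave (ketbra hole hole) = single 2 2 1 := toPwave_ketbra 2 2
  rw [Sz_sq, map_add, hup_up, h_hole_hole]
  ext i j
  fin_cases i <;> fin_cases j <;> simp

theorem toPwave_Sx_sq : toPwave (Sx ^ 2) = diagonal ![0, 1, 1] := by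
  have hdown_down : toPwave (ketbra down down) = single 1 1 1 := toPwave_ketbra 1 1
  have h_hole_hole : toPwave (ketbra hole hole) = single 2 2 1 := toPwave_ketbra 2 2
  rw [Sx_sq, map_add, hdown_down, h_hole_hole]
  ext i j
  fin_cases i <;> fin_cases j <;> simp

theorem toPwave_halfTurn_Sz : toPwave (halfTurn Sz) = diagonal ![-1, 1, -1] := by
  rw [halfTurn, map_sub, map_one, map_smul, toPwave_Sz_sq]
  ext i j
  fin_cases i <;> fin_cases j <;> norm_num

theorem toPwave_halfTurn_Sx : toPwave (halfTurn Sx) = diagonal ![1, -1, -1] := by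
  rw [halfTurn, map_sub, map_one, map_smul, toPwave_Sx_sq]
  ext i j
  fin_cases i <;> fin_cases j <;> norm_num

theorem sigy_mul_halfTurn_Sz : sigy * halfTurn Sz = (-I) • sigx := by
  apply EquivLike.injective toPwave
  rw [map_mul, map_smul, toPwave_sigy, toPwave_halfTurn_Sz, toPwave_sigx]
  ext i j
  fin_cases i <;> fin_cases j <;> simp

theorem halfTurn_Sx_mul_sigy : halfTurn Sx * sigy = (-I) • sigx := by
  apply EquivLike.injective toPwave
  rw [map_mul, map_smul, toPwave_sigy, toPwave_halfTurn_Sx, toPwave_sigx]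
  ext i j
  fin_cases i <;> fin_cases j <;> simp

theorem nMat_mul_halfTurn_Sx_mul_halfTurn_Sz :
    nMat * (halfTurn Sx * halfTurn Sz) = -nMat := by
  apply EquivLike.injective toPwave
  simp only [map_mul, map_neg, toPwave_halfTurn_Sx, toPwave_halfTurn_Sz, toPwave_nMat]
  ext i j
  fin_cases i <;> fin_cases j <;> simp

variable {L : ℕ}

/-- The matrix of an operator of the chain in the product p-wave basis. -/
def chainToPwave (L : ℕ) : Op L ≃⋆ₐ[ℂ] Op L :=
  Unitary.conjStarAlgAut ℂ _ (star ⟨piKronecker fun _ => pwaveMatrix.1,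
    piKronecker_mem_unitaryGroup fun _ => pwaveMatrix.2⟩)

theorem chainToPwave_piKronecker (A : Fin L → Matrix (Fin 3) (Fin 3) ℂ) :
    chainToPwave L (piKronecker A) = piKronecker fun k => toPwave (A k) := by
  simp only [chainToPwave, toPwave, Unitary.conjStarAlgAut_star_apply, star_piKronecker,
    ← map_mul]
  rfl

theorem chainToPwave_site (A : Matrix (Fin 3) (Fin 3) ℂ) (j : Fin L) :
    chainToPwave L (site A j) = site (toPwave A) j := by
  rw [site_eq_piKronecker, chainToPwave_piKronecker, site_eq_piKronecker]
  exact congrArg piKronecker (Pi.mulSingle_op (fun _ => toPwave) (fun _ => map_one _) j A).symm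

end Frame

section KennedyTasaki

variable {L : ℕ}

theorem ktFactor_eq_halfTurn {u v : Fin L} (huv : u ≠ v) :
    ktFactor u v = halfTurn (site Sz u * site Sx v) := by
  have hcube : (site Sz u * site Sx v) ^ 3 = site Sz u * site Sx v := by
    rw [(commute_site Sz Sx huv).mul_pow, site_pow, site_pow, Sz_pow_three, Sx_pow_three]
  let _ : NormedRing (Op L) := Matrix.linftyOpNormedRing
  let _ : NormedAlgebra ℂ (Op L) := Matrix.linftyOpNormedAlgebra
  exact exp_pi_mul_I_smul_eq_halfTurn hcube

/-- The eigenvalue of a factor `exp(iπ Sᶻ_u Sˣ_v)` of `U_KT` on a product p-wave state with local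
states `x` at `u` and `y` at `v`. -/
def ktSign (x y : Fin 3) : ℂ := 1 - 2 * (![1, 0, 1] x * ![0, 1, 1] y)

theorem chainToPwave_ktFactor {u v : Fin L} (huv : u ≠ v) :
    chainToPwave L (ktFactor u v) = diagonal fun f => ktSign (f u) (f v) := by
  rw [ktFactor_eq_halfTurn huv, halfTurn, (commute_site Sz Sx huv).mul_pow, site_pow, site_pow,
    map_sub, map_one, map_smul, map_mul, chainToPwave_site, chainToPwave_site, toPwave_Sz_sq,
    toPwave_Sx_sq, site_diagonal, site_diagonal, diagonal_mul_diagonal, ← diagonal_smul,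
    ← diagonal_one, diagonal_sub]
  rfl

/-- The eigenvalue of `U_KT` on the product p-wave state `f`. -/
def uktSign (f : Fin L → Fin 3) : ℂ := ∏ u, ∏ v, if u < v then ktSign (f u) (f v) else 1

theorem chainToPwave_UKT : chainToPwave L (UKT L) = diagonal uktSign := by
  have hfactor : ∀ u v : Fin L, chainToPwave L (if u < v then ktFactor u v else 1) =
      diagonalRingHom (Fin L → Fin 3) ℂ fun f => if u < v then ktSign (f u) (f v) else 1 := by
    intro u v
    split_ifs with huv
    · exact chainToPwave_ktFactor huv.ne
    · rw [map_one]
      exact (map_one (diagonalRingHom _ _)).symm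
  have hdiag : (diagonal uktSign : Op L) = diagonalRingHom (Fin L → Fin 3) ℂ
      (∏ u, ∏ v, fun f => if u < v then ktSign (f u) (f v) else 1) := by
    refine congrArg diagonal (funext fun f => ?_)
    simp only [uktSign, Finset.prod_apply]
  rw [hdiag, UKT]
  simp only [map_list_prod, List.map_map, Fin.prod_univ_def, Function.comp_def, hfactor]

theorem ktSign_mul_self (x y : Fin 3) : ktSign x y * ktSign x y = 1 := by
  fin_cases x <;> fin_cases y <;> norm_num [ktSign]

theorem UKT_mul_self : UKT L * UKT L = 1 := by
  apply EquivLike.injective (chainToPwave L)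
  rw [map_mul, map_one, chainToPwave_UKT, diagonal_mul_diagonal, ← diagonal_one]
  refine congrArg diagonal (funext fun f => ?_)
  simp only [uktSign, ← Finset.prod_mul_distrib]
  refine Finset.prod_eq_one fun u _ => Finset.prod_eq_one fun v _ => ?_
  split_ifs
  · exact ktSign_mul_self _ _
  · exact mul_one 1

theorem uktSign_mul_uktSign {f g : Fin L → Fin 3} {j : Fin L} (hfg : ∀ k ≠ j, f k = g k) :
    uktSign f * uktSign g = ∏ k,
      if k < j then ktSign (g k) (f j) * ktSign (g k) (g j)
      else if j < k then ktSign (f j) (g k) * ktSign (g j) (g k) else 1 := by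
  have hpair : ∀ u v : Fin L,
      ((if u < v then ktSign (f u) (f v) else 1) * if u < v then ktSign (g u) (g v) else 1) =
        (if v = j then if u < j then ktSign (g u) (f j) * ktSign (g u) (g j) else 1 else 1) *
          if u = j then if j < v then ktSign (f j) (g v) * ktSign (g j) (g v) else 1 else 1 := by
    intro u v
    rcases eq_or_ne u j with rfl | hu
    · rcases eq_or_ne v u with rfl | hv
      · simp
      · by_cases huv : u < v <;> simp [huv, hv, hfg v hv]
    · rcases eq_or_ne v j with rfl | hv
      · by_cases huv : u < v <;> simp [huv, hu, hfg u hu]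
      · by_cases huv : u < v <;> simp [huv, hu, hv, hfg u hu, hfg v hv, ktSign_mul_self]
  have hstring : ∀ k : Fin L,
      ((if k < j then ktSign (g k) (f j) * ktSign (g k) (g j) else 1) *
        if j < k then ktSign (f j) (g k) * ktSign (g j) (g k) else 1) =
      if k < j then ktSign (g k) (f j) * ktSign (g k) (g j)
      else if j < k then ktSign (f j) (g k) * ktSign (g j) (g k) else 1 := by
    intro k
    by_cases hk : k < j
    · simp [hk, hk.not_gt]
    · simp [hk]
  simp only [uktSign, ← Finset.prod_mul_distrib, hpair]
  simp only [Finset.prod_mul_distrib, Finset.prod_ite_irrel, Finset.prod_const_one,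
    Finset.prod_ite_eq', Finset.mem_univ, if_true]
  rw [← Finset.prod_mul_distrib]
  exact Finset.prod_congr rfl fun k _ => hstring k

/-- The string of half-turns which conjugation by `U_KT` attaches to `σʸ_j`: rotations about `z`
on the sites to the left of `j` and about `x` on the sites to the right of `j`. -/
def ktString (j k : Fin L) : Matrix (Fin 3) (Fin 3) ℂ :=
  if k < j then halfTurn Sz else if j < k then halfTurn Sx else 1

theorem toPwave_sigy_apply_ne_zero {x y : Fin 3} (h : toPwave sigy x y ≠ 0) :
    x = 0 ∧ y = 1 ∨ x = 1 ∧ y = 0 := by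
  rw [toPwave_sigy] at h
  fin_cases x <;> fin_cases y <;> simp_all

theorem toPwave_ktString {x y : Fin 3} (hxy : x = 0 ∧ y = 1 ∨ x = 1 ∧ y = 0) (j k : Fin L) :
    toPwave (ktString j k) = diagonal fun a =>
      if k < j then ktSign a x * ktSign a y
      else if j < k then ktSign x a * ktSign y a else 1 := by
  unfold ktString
  split_ifs
  · rw [toPwave_halfTurn_Sz]
    refine congrArg diagonal (funext fun a => ?_)
    rcases hxy with ⟨rfl, rfl⟩ | ⟨rfl, rfl⟩ <;> fin_cases a <;> norm_num [ktSign]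
  · rw [toPwave_halfTurn_Sx]
    refine congrArg diagonal (funext fun a => ?_)
    rcases hxy with ⟨rfl, rfl⟩ | ⟨rfl, rfl⟩ <;> fin_cases a <;> norm_num [ktSign]
  · rw [map_one, diagonal_one]

theorem UKT_mul_site_sigy_mul_UKT (j : Fin L) :
    UKT L * site sigy j * UKT L = site sigy j * piKronecker (ktString j) := by
  apply EquivLike.injective (chainToPwave L)
  simp only [map_mul, chainToPwave_UKT, chainToPwave_site, chainToPwave_piKronecker]
  ext f g
  rw [mul_diagonal, diagonal_mul]
  by_cases hzero : site (toPwave sigy) j f g = 0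
  · simp [hzero, toPwave_ktString (.inl ⟨rfl, rfl⟩), piKronecker_diagonal]
  · obtain ⟨hj, hoff⟩ := site_apply_ne_zero hzero
    simp only [toPwave_ktString (toPwave_sigy_apply_ne_zero hj), piKronecker_diagonal, mul_diagonal]
    rw [mul_right_comm, uktSign_mul_uktSign hoff, mul_comm]

theorem UKT_mul_site_sigy_mul_site_sigy_mul_UKT (j k : Fin L) :
    UKT L * (site sigy j * site sigy k) * UKT L =
      piKronecker (Pi.mulSingle j sigy * ktString j * (Pi.mulSingle k sigy * ktString k)) := by
  calc UKT L * (site sigy j * site sigy k) * UKT L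
      = UKT L * site sigy j * (UKT L * UKT L) * site sigy k * UKT L := by
        rw [UKT_mul_self, mul_one, mul_assoc (UKT L) (site sigy j)]
    _ = (UKT L * site sigy j * UKT L) * (UKT L * site sigy k * UKT L) := by
        simp only [mul_assoc]
    _ = _ := by
        simp only [UKT_mul_site_sigy_mul_UKT, map_mul, ← site_eq_piKronecker]

end KennedyTasaki

section Duality

variable {L : ℕ}

/-- The phase picked up at site `m` when `σʸ_j σʸ_k`, with its two strings of half-turns, is
rewritten as `σˣ_j σˣ_k` on hole-free states. -/
def dualityPhase (j k m : Fin L) : ℂ :=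
  (if m = j then -I else 1) * (if m = k then -I else 1) *
    (if m ∈ Finset.Ioo j k then -1 else 1)

theorem prod_dualityPhase {j k : Fin L} (hjk : j < k) :
    ∏ m, dualityPhase j k m = (-1) ^ ((j : ℕ) + k) := by
  have hexp : (j : ℕ) + k = 2 * j + 1 + (k - j - 1) := by omega
  have heven : Even (2 * (j : ℕ)) := even_two_mul _
  simp only [dualityPhase, Finset.prod_mul_distrib, Finset.prod_ite_eq', Finset.mem_univ, if_true,
    Finset.prod_ite_mem, Finset.univ_inter, Finset.prod_const, Fin.card_Ioo]
  rw [hexp, pow_add, pow_succ, heven.neg_one_pow, neg_mul_neg, I_mul_I, one_mul]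

theorem nMat_mul_ktStrings_mul_nMat {j k : Fin L} (hjk : j < k) (m : Fin L) :
    nMat * ((Pi.mulSingle j sigy * ktString j * (Pi.mulSingle k sigy * ktString k) :
        Fin L → Matrix (Fin 3) (Fin 3) ℂ) m) * nMat =
      dualityPhase j k m •
        (nMat * (Pi.mulSingle j sigx * Pi.mulSingle k sigx : Fin L → Matrix (Fin 3) (Fin 3) ℂ) m *
          nMat) := by
  simp only [Pi.mul_apply]
  rcases lt_trichotomy m j with hmj | rfl | hjm
  · have hmk : m < k := hmj.trans hjk
    simp [dualityPhase, ktString, hmj, hmk, hmj.ne, hmk.ne, hmj.not_gt,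
      halfTurn_mul_self Sz_pow_three]
  · simp [dualityPhase, ktString, hjk, hjk.ne, sigy_mul_halfTurn_Sz]
  · rcases lt_trichotomy m k with hmk | rfl | hkm
    · simp [dualityPhase, ktString, hjm, hmk, hjm.ne', hmk.ne, hjm.not_gt,
        nMat_mul_halfTurn_Sx_mul_halfTurn_Sz]
    · simp [dualityPhase, ktString, hjm, hjm.ne', hjm.not_gt, halfTurn_Sx_mul_sigy]
    · simp [dualityPhase, ktString, hjm, hkm, hjm.ne', hkm.ne', hjm.not_gt, hkm.not_gt,
        halfTurn_mul_self Sx_pow_three]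

theorem UKT_sigy_sigx_duality_of_lt {j k : Fin L} (hjk : j < k) :
    Pproj L * (UKT L * (site sigy j * site sigy k) * UKT L) * Pproj L =
      ((-1 : ℂ) ^ ((j : ℕ) + k)) • (Pproj L * (site sigx j * site sigx k) * Pproj L) := by
  rw [UKT_mul_site_sigy_mul_site_sigy_mul_UKT, site_eq_piKronecker, site_eq_piKronecker,
    Pproj_eq_piKronecker, ← prod_dualityPhase hjk]
  simp only [← map_mul, ← piKronecker_smul]
  exact congrArg piKronecker (funext (nMat_mul_ktStrings_mul_nMat hjk))

theorem UKT_sigy_sigx_duality_general {j k : Fin L} (hjk : j ≠ k) :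
    Pproj L * (UKT L * (site sigy j * site sigy k) * UKT L) * Pproj L =
      ((-1 : ℂ) ^ ((j : ℕ) + k)) • (Pproj L * (site sigx j * site sigx k) * Pproj L) := by
  rcases hjk.lt_or_gt with hlt | hgt
  · exact UKT_sigy_sigx_duality_of_lt hlt
  · rw [commute_site sigy sigy hjk, commute_site sigx sigx hjk, add_comm]
    exact UKT_sigy_sigx_duality_of_lt hgt

end Duality

/-- For every bulk bond (1-based `1 ≤ j ≤ L−2`, here 0-based `j` with
`j+2 < L`), `P U_KT σʸ_j σʸ_{j+1} U_KT P = −P σˣ_j σˣ_{j+1} P`, while for the wrap-around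
pair `P U_KT σʸ_L σʸ_1 U_KT P = (−1)^{L−1} P σˣ_L σˣ_1 P`. -/
theorem UKT_sigy_sigx_duality (L : ℕ) (hL : 3 ≤ L) :
    (∀ j : ℕ, ∀ hj : j + 2 < L,
        Pproj L * (UKT L * (site sigy ⟨j, by omega⟩ * site sigy ⟨j + 1, by omega⟩) * UKT L) *
            Pproj L =
          -(Pproj L * (site sigx ⟨j, by omega⟩ * site sigx ⟨j + 1, by omega⟩) * Pproj L)) ∧
      Pproj L * (UKT L * (site sigy ⟨L - 1, by omega⟩ * site sigy ⟨0, by omega⟩) * UKT L) *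
          Pproj L =
        ((-1 : ℂ) ^ (L - 1)) •
          (Pproj L * (site sigx ⟨L - 1, by omega⟩ * site sigx ⟨0, by omega⟩) * Pproj L) := by
  constructor
  · intro j hj
    have hodd : Odd (j + (j + 1)) := ⟨j, by omega⟩
    rw [UKT_sigy_sigx_duality_general (by simp), hodd.neg_one_pow, neg_one_smul]
  · exact UKT_sigy_sigx_duality_general (Fin.ne_of_val_ne (by dsimp only; omega))

end
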